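/- arXiv:0904.1906 — 2 statements merged into one kernel-verified Lean document; each statement's English description precedes it below -/
import Mathlib

section
/- Let 1, α₁, α₂ be linearly independent over ℤ, let m_ν, m_{ν+1} be two consecutive best approximations, put A_ν = M_ν^{1/τ}/120, and suppose ζ_ν ≥ A_ν · M_{ν+1}^{−τ/(τ−1)}. Then there exists an integer point (x₁⁰, x₂⁰) such that x₁⁰ > 0, x₂⁰ > 0, M_{ν+1} ≤ max{x₁⁰, x₂⁰} ≤ 2·M_{ν+1}^τ·A_ν^{−1}, and ‖α₁x₁⁰ + α₂x₂⁰‖ ≤ 24^τ·M_ν^{(1−τ)/τ}·(max{x₁⁰, x₂⁰})^{−τ}. -/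
/-- distance from a real number to the nearest integer -/
noncomputable def nint (ξ : ℝ) : ℝ := |ξ - round ξ|

/-- `1, α₁, α₂` are linearly independent over `ℤ` -/
def ZLinIndep (α₁ α₂ : ℝ) : Prop :=
  ∀ a b c : ℤ, (a : ℝ) + b * α₁ + c * α₂ = 0 → a = 0 ∧ b = 0 ∧ c = 0

/-- the golden ratio τ = (1+√5)/2 -/
noncomputable def tau : ℝ := (1 + Real.sqrt 5) / 2

/-- the value of the linear form ζ(m) = m₀ + m₁α₁ + m₂α₂ at an integer vector m -/
noncomputable def zform (α₁ α₂ : ℝ) (m : ℤ × ℤ × ℤ) : ℝ :=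
  (m.1 : ℝ) + m.2.1 * α₁ + m.2.2 * α₂

/-- the height M(m) = max{|m₁|, |m₂|} of an integer vector m = (m₀, m₁, m₂) -/
def hgt (m : ℤ × ℤ × ℤ) : ℤ := max |m.2.1| |m.2.2|

/-- `m` is a best approximation (in the sense of the linear form) for `α₁, α₂`:
`|ζ(m)|` is minimal among all integer vectors `n` with `0 < max{|n₁|,|n₂|} ≤ max{|m₁|,|m₂|}`. -/
noncomputable def IsBestApprox (α₁ α₂ : ℝ) (m : ℤ × ℤ × ℤ) : Prop :=
  0 < hgt m ∧
  ∀ n : ℤ × ℤ × ℤ, 0 < hgt n → hgt n ≤ hgt m →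
    |zform α₁ α₂ m| ≤ |zform α₁ α₂ n|

/-- `m` and `m'` are two consecutive best approximations (`m = m_ν`, `m' = m_{ν+1}`):
both are best approximations, `M(m) < M(m')`, and no best approximation has height
strictly between them. -/
noncomputable def ConsecutiveBest (α₁ α₂ : ℝ) (m m' : ℤ × ℤ × ℤ) : Prop :=
  IsBestApprox α₁ α₂ m ∧ IsBestApprox α₁ α₂ m' ∧ hgt m < hgt m' ∧
  ∀ n : ℤ × ℤ × ℤ, IsBestApprox α₁ α₂ n → hgt n ≤ hgt m ∨ hgt m' ≤ hgt n


theorem zform_lin (α₁ α₂ : ℝ) (a b : ℤ) (p q : ℤ × ℤ × ℤ) :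
    zform α₁ α₂ (a * p.1 + b * q.1, a * p.2.1 + b * q.2.1, a * p.2.2 + b * q.2.2)
      = a * zform α₁ α₂ p + b * zform α₁ α₂ q := by
  simp only [zform]; push_cast; ring

theorem tau_facts : 1 < tau ∧ tau < 2 ∧ tau ^ 2 = tau + 1 := by
  have h5 : Real.sqrt 5 ^ 2 = 5 := Real.sq_sqrt (by norm_num)
  have h0 : 0 ≤ Real.sqrt 5 := Real.sqrt_nonneg 5
  unfold tau
  refine ⟨by nlinarith, by nlinarith, by nlinarith⟩

/-- admissibility of the box below the next best approximation -/
theorem adm (α₁ α₂ : ℝ) (m m' : ℤ × ℤ × ℤ) (hc : ConsecutiveBest α₁ α₂ m m')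
    (n : ℤ × ℤ × ℤ) (hn : 0 < hgt n) (hn' : hgt n < hgt m') :
    |zform α₁ α₂ m| ≤ |zform α₁ α₂ n| := by
  obtain ⟨hm, hm', hlt, hcon⟩ := hc
  let g : ℤ × ℤ → ℤ × ℤ × ℤ := fun x => (-round (x.1 * α₁ + x.2 * α₂), x.1, x.2)
  let S : Finset (ℤ × ℤ) := (Finset.Icc (-hgt n) (hgt n) ×ˢ Finset.Icc (-hgt n) (hgt n)).filter
    (fun x => 0 < hgt (g x))
  have memS : ∀ r : ℤ × ℤ × ℤ, 0 < hgt r → hgt r ≤ hgt n → (r.2.1, r.2.2) ∈ S := by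
    intro r h1 h2
    have h3 : |r.2.1| ≤ hgt n := le_trans (le_max_left _ _) h2
    have h4 : |r.2.2| ≤ hgt n := le_trans (le_max_right _ _) h2
    rw [abs_le] at h3 h4
    simp only [S, Finset.mem_filter, Finset.mem_product, Finset.mem_Icc]
    exact ⟨⟨h3, h4⟩, h1⟩
  have gle : ∀ r : ℤ × ℤ × ℤ, |zform α₁ α₂ (g (r.2.1, r.2.2))| ≤ |zform α₁ α₂ r| := by
    intro r
    have := round_le (r.2.1 * α₁ + r.2.2 * α₂ : ℝ) (-r.1)
    have e1 : zform α₁ α₂ (g (r.2.1, r.2.2))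
        = r.2.1 * α₁ + r.2.2 * α₂ - round (r.2.1 * α₁ + r.2.2 * α₂ : ℝ) := by
      simp only [zform, g]; push_cast; ring
    have e2 : zform α₁ α₂ r = r.2.1 * α₁ + r.2.2 * α₂ - ((-r.1 : ℤ) : ℝ) := by
      simp only [zform]; push_cast; ring
    rw [e1, e2]
    exact this
  obtain ⟨b, hbS, hb⟩ := Finset.exists_min_image S (fun x => |zform α₁ α₂ (g x)|)
    ⟨_, memS n hn le_rfl⟩
  have hbS' := hbS
  simp only [S, Finset.mem_filter, Finset.mem_product, Finset.mem_Icc] at hbS'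
  have hbn : hgt (g b) ≤ hgt n := by
    apply max_le <;> rw [abs_le]
    exacts [hbS'.1.1, hbS'.1.2]
  have hbest : IsBestApprox α₁ α₂ (g b) := by
    refine ⟨hbS'.2, fun r h1 h2 => ?_⟩
    exact (hb _ (memS r h1 (h2.trans hbn))).trans (gle r)
  have hfin : |zform α₁ α₂ (g b)| ≤ |zform α₁ α₂ n| :=
    (hb _ (memS n hn le_rfl)).trans (gle n)
  rcases hcon _ hbest with h | h
  · exact (hm.2 _ hbS'.2 h).trans hfin
  · omega

theorem pigeon (α₁ α₂ ζ : ℝ) (X : ℤ) (hX : 2 ≤ X)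
    (hadm : ∀ n : ℤ × ℤ × ℤ, 0 < hgt n → hgt n < X → ζ ≤ |zform α₁ α₂ n|) :
    ζ * (X : ℝ) ^ 2 ≤ 2 := by
  set K : ℤ := X ^ 2 - 1 with hK
  have hK3 : 3 ≤ K := by nlinarith
  have hKr : (3 : ℝ) ≤ K := by exact_mod_cast hK3
  let φ : ℤ × ℤ → ℝ := fun x => x.1 * α₁ + x.2 * α₂
  obtain ⟨x, hx, y, hy, hne, heq⟩ := Finset.exists_ne_map_eq_of_card_lt_of_maps_to
    (s := Finset.Ico 0 X ×ˢ Finset.Ico 0 X) (t := Finset.Ico 0 K)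
    (f := fun x => ⌊Int.fract (φ x) * K⌋)
    (by
      simp only [Finset.card_product, Int.card_Ico, sub_zero]
      zify
      rw [Int.toNat_of_nonneg (by omega), Int.toNat_of_nonneg (by omega)]
      rw [hK]; nlinarith)
    (by
      intro x _
      simp only [Finset.coe_Ico, Set.mem_Ico]
      have h0 := Int.fract_nonneg (φ x)
      have h1 := Int.fract_lt_one (φ x)
      constructor
      · apply Int.floor_nonneg.2; positivity
      · rw [Int.floor_lt]; nlinarith)
  simp only [Finset.mem_product, Finset.mem_Ico] at hx hy
  have habs := Int.abs_sub_lt_one_of_floor_eq_floor heq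
  rw [← sub_mul, abs_mul, abs_of_pos (by linarith : (0:ℝ) < K)] at habs
  have h1 := hadm (⌊φ y⌋ - ⌊φ x⌋, x.1 - y.1, x.2 - y.2)
    (by
      simp only [hgt]
      by_contra hcon
      have ha : |x.1 - y.1| ≤ 0 := (le_max_left _ _).trans (not_lt.1 hcon)
      have hb : |x.2 - y.2| ≤ 0 := (le_max_right _ _).trans (not_lt.1 hcon)
      rw [abs_nonpos_iff] at ha hb
      exact hne (Prod.ext (by omega) (by omega)))
    (by
      simp only [hgt]
      apply max_lt <;> rw [abs_lt] <;> constructor <;> omega)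
  have h2 : zform α₁ α₂ (⌊φ y⌋ - ⌊φ x⌋, x.1 - y.1, x.2 - y.2)
      = Int.fract (φ x) - Int.fract (φ y) := by
    simp only [zform, Int.fract, φ]; push_cast; ring
  rw [h2] at h1
  have h3 : ζ * K ≤ 1 := by nlinarith
  have h4 : (X : ℝ) ^ 2 = K + 1 := by rw [hK]; push_cast; ring
  rw [h4]; nlinarith

theorem numeric (M X : ℤ) (ζ h : ℝ) (hM : 1 ≤ M) (hMX : M < X) (hζ : 0 < ζ)
    (hζX : ζ * (X : ℝ) ^ 2 ≤ 2)
    (hz : (M : ℝ) ^ (1 / tau) / 120 * (X : ℝ) ^ (-(tau / (tau - 1))) ≤ ζ)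
    (hh : (X : ℝ) ≤ h) (hh' : h ≤ 3 * X + 1 / (X * ζ)) :
    h ≤ 2 * (X : ℝ) ^ tau * ((M : ℝ) ^ (1 / tau) / 120)⁻¹ ∧
    ζ ≤ 24 ^ tau * (M : ℝ) ^ ((1 - tau) / tau) * h ^ (-tau) := by
  obtain ⟨t1, t2, t3⟩ := tau_facts
  have hM' : (1 : ℝ) ≤ M := by exact_mod_cast hM
  have hMX' : (M : ℝ) ≤ X := by exact_mod_cast hMX.le
  have hM0 : (0 : ℝ) < M := by linarith
  have hX0 : (0 : ℝ) < X := by linarith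
  have hh0 : 0 < h := by linarith
  have e1 : 1 / tau = tau - 1 := by field_simp; nlinarith
  have e2 : tau / (tau - 1) = tau + 1 := by
    have : tau - 1 ≠ 0 := by linarith
    field_simp; nlinarith
  have e3 : (1 - tau) / tau = tau - 2 := by field_simp; nlinarith
  rw [e1, e2] at hz
  rw [e1, e3]
  set A : ℝ := (M : ℝ) ^ (tau - 1) / 120 with hA
  have hA0 : 0 < A := by positivity
  have hXt : 0 < (X : ℝ) ^ tau := by positivity
  have eX : (X : ℝ) ^ (-(tau + 1)) = ((X : ℝ) ^ tau * X)⁻¹ := by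
    rw [Real.rpow_neg hX0.le, Real.rpow_add hX0, Real.rpow_one]
  constructor
  · have hD : 1 / (X * ζ) ≤ (X : ℝ) ^ tau * A⁻¹ := by
      rw [eX] at hz
      rw [div_le_iff₀ (by positivity)]
      calc (1 : ℝ) = (X : ℝ) ^ tau * A⁻¹ * (X * (A * ((X : ℝ) ^ tau * X)⁻¹)) := by
            field_simp
        _ ≤ _ := by gcongr
    have hXA : (X : ℝ) * 120 ≤ (X : ℝ) ^ tau * A⁻¹ := by
      rw [← div_eq_mul_inv, le_div_iff₀ hA0, hA]
      have h1 : (M : ℝ) ^ (tau - 1) ≤ (X : ℝ) ^ (tau - 1) :=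
        Real.rpow_le_rpow hM0.le hMX' (by linarith)
      have h2 : (X : ℝ) ^ tau = X * (X : ℝ) ^ (tau - 1) := by
        rw [Real.rpow_sub_one hX0.ne']; field_simp
      rw [h2]
      calc _ = (X : ℝ) * (M : ℝ) ^ (tau - 1) := by ring
        _ ≤ _ := by gcongr
    have : 0 < (X : ℝ) ^ tau * A⁻¹ := by positivity
    linarith
  · rw [Real.rpow_neg hh0.le, ← div_eq_mul_inv, le_div_iff₀ (by positivity)]
    by_cases hD : 1 / (X * ζ) ≤ 3 * X
    · have h6 : h ≤ 6 * X := by linarith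
      have h1 : h ^ tau ≤ 6 ^ tau * (X : ℝ) ^ tau := by
        rw [← Real.mul_rpow (by norm_num) hX0.le]
        exact Real.rpow_le_rpow hh0.le h6 (by linarith)
      have h2 : (X : ℝ) ^ tau = (X : ℝ) ^ (tau - 2) * (X : ℝ) ^ 2 := by
        rw [← Real.rpow_natCast, ← Real.rpow_add hX0]; norm_num
      have h3 : (X : ℝ) ^ (tau - 2) ≤ (M : ℝ) ^ (tau - 2) :=
        Real.rpow_le_rpow_of_nonpos hM0 hMX' (by linarith)
      have h4 : (2 : ℝ) ≤ 4 ^ tau := by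
        calc (2 : ℝ) ≤ 4 ^ (1 : ℝ) := by norm_num
          _ ≤ 4 ^ tau := Real.rpow_le_rpow_of_exponent_le (by norm_num) t1.le
      have h5 : (24 : ℝ) ^ tau = 4 ^ tau * 6 ^ tau := by
        rw [← Real.mul_rpow (by norm_num) (by norm_num)]; norm_num
      rw [h5]
      calc ζ * h ^ tau ≤ ζ * (6 ^ tau * ((X : ℝ) ^ (tau - 2) * (X : ℝ) ^ 2)) := by
            rw [← h2]; gcongr
        _ = (ζ * (X : ℝ) ^ 2) * (6 ^ tau * (X : ℝ) ^ (tau - 2)) := by ring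
        _ ≤ 4 ^ tau * (6 ^ tau * (M : ℝ) ^ (tau - 2)) := by
            gcongr
            linarith
        _ = _ := by ring
    · push Not at hD
      have h6 : h ≤ 2 * (1 / (X * ζ)) := by linarith
      have h1 : h ^ tau ≤ 2 ^ tau * ((X : ℝ) ^ tau * ζ ^ tau)⁻¹ := by
        rw [← Real.mul_rpow hX0.le hζ.le, ← Real.inv_rpow (by positivity),
          ← Real.mul_rpow (by norm_num) (by positivity)]
        refine Real.rpow_le_rpow hh0.le ?_ (by linarith)
        rwa [one_div] at h6
      have h2 : ζ ^ tau = ζ * ζ ^ (tau - 1) := by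
        rw [Real.rpow_sub_one hζ.ne']; field_simp
      have h3 : A ^ (tau - 1) ≤ (X : ℝ) ^ tau * ζ ^ (tau - 1) := by
        have := Real.rpow_le_rpow (by positivity) hz (by linarith : 0 ≤ tau - 1)
        rw [Real.mul_rpow hA0.le (by positivity), ← Real.rpow_mul hX0.le,
          show -(tau + 1) * (tau - 1) = - tau by nlinarith, Real.rpow_neg hX0.le,
          ← div_eq_mul_inv, div_le_iff₀ hXt] at this
        linarith
      have hB : A ^ (tau - 1) = (M : ℝ) ^ (2 - tau) / 120 ^ (tau - 1) := by
        rw [hA, Real.div_rpow (by positivity) (by norm_num), ← Real.rpow_mul hM0.le]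
        congr 2; nlinarith
      have h4 : (120 : ℝ) ^ (tau - 1) ≤ 12 ^ tau := by
        calc (120 : ℝ) ^ (tau - 1) ≤ 144 ^ (tau - 1) :=
              Real.rpow_le_rpow (by norm_num) (by norm_num) (by linarith)
          _ = 12 ^ (2 * (tau - 1)) := by
              rw [Real.rpow_mul (by norm_num)]; norm_num
          _ ≤ 12 ^ tau := Real.rpow_le_rpow_of_exponent_le (by norm_num) (by linarith)
      have h5 : (24 : ℝ) ^ tau = 2 ^ tau * 12 ^ tau := by
        rw [← Real.mul_rpow (by norm_num) (by norm_num)]; norm_num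
      have h7 : (M : ℝ) ^ (tau - 2) = ((M : ℝ) ^ (2 - tau))⁻¹ := by
        rw [← Real.rpow_neg hM0.le]; congr 1; ring
      calc ζ * h ^ tau ≤ ζ * (2 ^ tau * ((X : ℝ) ^ tau * (ζ * ζ ^ (tau - 1)))⁻¹) := by
            rw [← h2]; gcongr
        _ = 2 ^ tau * ((X : ℝ) ^ tau * ζ ^ (tau - 1))⁻¹ := by field_simp
        _ ≤ 2 ^ tau * (A ^ (tau - 1))⁻¹ := by gcongr
        _ = 2 ^ tau * 120 ^ (tau - 1) * (M : ℝ) ^ (tau - 2) := by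
            rw [hB, h7]; field_simp
        _ ≤ _ := by rw [h5]; gcongr
/-- small integer combinations divided by `l` -/
theorem prim_aux (α₁ α₂ ζ : ℝ) (p q : ℤ × ℤ × ℤ) (l : ℤ) (hl : 2 ≤ l)
    (hadm : ∀ n : ℤ × ℤ × ℤ, 0 < hgt n → hgt n < hgt q → ζ ≤ |zform α₁ α₂ n|)
    (h0 : ∀ n : ℤ × ℤ × ℤ, hgt n = 0 → |zform α₁ α₂ n| < ζ → n = 0)
    (hp : |zform α₁ α₂ p| = ζ) (hq : |zform α₁ α₂ q| < ζ) (hpq : hgt p < hgt q)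
    (hp0 : 0 < hgt p) (a b : ℤ) (ha : 2 * |a| ≤ l) (hb : 2 * |b| ≤ l)
    (r : ℤ × ℤ × ℤ) (e0 : a * p.1 + b * q.1 = l * r.1)
    (e1 : a * p.2.1 + b * q.2.1 = l * r.2.1)
    (e2 : a * p.2.2 + b * q.2.2 = l * r.2.2) : a = 0 ∧ b = 0 := by
  have hlr : (2 : ℝ) ≤ l := by exact_mod_cast hl
  have har : 2 * |(a : ℝ)| ≤ l := by exact_mod_cast ha
  have hbr : 2 * |(b : ℝ)| ≤ l := by exact_mod_cast hb
  have hz : l * zform α₁ α₂ r = a * zform α₁ α₂ p + b * zform α₁ α₂ q := by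
    rw [← zform_lin, e0, e1, e2]; simp only [zform]; push_cast; ring
  have hzr : |zform α₁ α₂ r| < ζ := by
    have h1 : (l : ℝ) * |zform α₁ α₂ r| ≤ |(a : ℝ)| * ζ + |(b : ℝ)| * |zform α₁ α₂ q| := by
      rw [← hp, ← abs_mul, ← abs_mul]
      calc _ = |l * zform α₁ α₂ r| := by rw [abs_mul, abs_of_pos (by linarith : (0:ℝ) < l)]
        _ ≤ _ := by rw [hz]; exact abs_add_le _ _
    have := abs_nonneg (zform α₁ α₂ q)
    by_contra hcon
    push Not at hcon
    nlinarith
  have hcoord : ∀ x y z : ℤ, a * x + b * y = l * z → |x| ≤ hgt p → |y| ≤ hgt q →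
      |z| < hgt q := by
    intro x y z e hx hy
    have h1 : l * |z| ≤ |a| * |x| + |b| * |y| := by
      rw [← abs_mul, ← abs_mul]
      calc _ = |l * z| := by rw [abs_mul, abs_of_pos (by linarith : 0 < l)]
        _ ≤ _ := by rw [← e]; exact abs_add_le _ _
    have := abs_nonneg x
    have := abs_nonneg y
    have := abs_nonneg a
    have := abs_nonneg b
    by_contra hcon
    push Not at hcon
    nlinarith
  have hr : hgt r < hgt q := max_lt
    (hcoord _ _ _ e1 (le_max_left _ _) (le_max_left _ _))
    (hcoord _ _ _ e2 (le_max_right _ _) (le_max_right _ _))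
  have hr0 : hgt r = 0 := by
    by_contra hne
    have : 0 ≤ hgt r := le_trans (abs_nonneg _) (le_max_left _ _)
    have := hadm r (by omega) hr
    linarith
  have r0 := h0 r hr0 hzr
  subst r0
  simp only [Prod.fst_zero, Prod.snd_zero, mul_zero] at e1 e2
  have hz2 : (a : ℝ) * zform α₁ α₂ p = - (b * zform α₁ α₂ q) := by
    have : zform α₁ α₂ 0 = 0 := by simp [zform]
    rw [this] at hz; linarith
  have hz3 : |(a : ℝ)| * ζ = |(b : ℝ)| * |zform α₁ α₂ q| := by
    rw [← hp, ← abs_mul, hz2, abs_neg, abs_mul]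
  have hH : |b| * hgt q ≤ |a| * hgt p := by
    have k1 : |b| * |q.2.1| ≤ |a| * hgt p := by
      rw [← abs_mul, show b * q.2.1 = -(a * p.2.1) by linarith, abs_neg, abs_mul]
      exact mul_le_mul_of_nonneg_left (le_max_left _ _) (abs_nonneg _)
    have k2 : |b| * |q.2.2| ≤ |a| * hgt p := by
      rw [← abs_mul, show b * q.2.2 = -(a * p.2.2) by linarith, abs_neg, abs_mul]
      exact mul_le_mul_of_nonneg_left (le_max_right _ _) (abs_nonneg _)
    rcases max_cases |q.2.1| |q.2.2| with h | h
    · simp only [hgt] at *; rw [h.1]; exact k1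
    · simp only [hgt] at *; rw [h.1]; exact k2
  have hζ0 : 0 < ζ := lt_of_le_of_lt (abs_nonneg _) hq
  have c1 : |a| ≤ |b| := by
    have : |(a : ℝ)| ≤ |(b : ℝ)| := by
      have := abs_nonneg (b : ℝ)
      by_contra hcon
      push Not at hcon
      nlinarith
    exact_mod_cast this
  have := abs_nonneg a
  have b0 : |b| = 0 := by
    by_contra hne
    have : 0 < |b| := lt_of_le_of_ne (abs_nonneg _) (Ne.symm hne)
    nlinarith
  have a0 : |a| = 0 := by omega
  exact ⟨abs_eq_zero.1 a0, abs_eq_zero.1 b0⟩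

theorem red (l a : ℤ) (hl : 2 ≤ l) : ∃ a' t : ℤ, a = a' + l * t ∧ 2 * |a'| ≤ l := by
  refine ⟨Int.bmod a l.toNat, Int.bdiv a l.toNat, ?_, ?_⟩
  · have := Int.bmod_add_bdiv a l.toNat
    rw [Int.toNat_of_nonneg (by omega)] at this; linarith
  · have h1 := Int.le_bmod (x := a) (m := l.toNat) (by omega)
    have h2 := Int.bmod_le (x := a) (m := l.toNat) (by omega)
    rcases abs_cases (Int.bmod a l.toNat) with h | h <;> omega

theorem prim (α₁ α₂ ζ : ℝ) (p q : ℤ × ℤ × ℤ) 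
    (hadm : ∀ n : ℤ × ℤ × ℤ, 0 < hgt n → hgt n < hgt q → ζ ≤ |zform α₁ α₂ n|)
    (h0 : ∀ n : ℤ × ℤ × ℤ, hgt n = 0 → |zform α₁ α₂ n| < ζ → n = 0)
    (hp : |zform α₁ α₂ p| = ζ) (hq : |zform α₁ α₂ q| < ζ) (hpq : hgt p < hgt q)
    (hp0 : 0 < hgt p) (l : ℤ) (hl : Prime l) (hl2 : 2 ≤ l)
    (d0 : l ∣ p.2.1 * q.2.2 - p.2.2 * q.2.1) (d1 : l ∣ p.2.2 * q.1 - p.1 * q.2.2)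
    (d2 : l ∣ p.1 * q.2.1 - p.2.1 * q.1) : False := by
  have key : ∀ a b : ℤ, l ∣ a * p.1 + b * q.1 → l ∣ a * p.2.1 + b * q.2.1 →
      l ∣ a * p.2.2 + b * q.2.2 → l ∣ a ∧ l ∣ b := by
    intro a b g0 g1 g2
    obtain ⟨a', t, ea, ha⟩ := red l a hl2
    obtain ⟨b', u, eb, hb⟩ := red l b hl2
    have sub : ∀ x y : ℤ, l ∣ a * x + b * y → ∃ z, a' * x + b' * y = l * z := by
      rintro x y ⟨z, hz⟩
      refine ⟨z - t * x - u * y, ?_⟩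
      rw [ea, eb] at hz; linear_combination hz
    obtain ⟨z0, k0⟩ := sub _ _ g0
    obtain ⟨z1, k1⟩ := sub _ _ g1
    obtain ⟨z2, k2⟩ := sub _ _ g2
    obtain ⟨a0, b0⟩ := prim_aux α₁ α₂ ζ p q l hl2 hadm h0 hp hq hpq hp0 a' b' ha hb
      (z0, z1, z2) k0 k1 k2
    rw [ea, eb, a0, b0]; simp
  have i0 := (key q.1 (-p.1) ⟨0, by ring⟩
    (by obtain ⟨c, hc⟩ := d2; exact ⟨-c, by linear_combination -hc⟩)
    (by convert d1 using 1; ring)).2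
  have i1 := (key q.2.1 (-p.2.1) (by convert d2 using 1; ring)
    ⟨0, by ring⟩ (by obtain ⟨c, hc⟩ := d0; exact ⟨-c, by linear_combination -hc⟩)).2
  have i2 := (key q.2.2 (-p.2.2) (by obtain ⟨c, hc⟩ := d1; exact ⟨-c, by linear_combination -hc⟩)
    (by convert d0 using 1; ring) ⟨0, by ring⟩).2
  rw [dvd_neg] at i0 i1 i2
  have := (key 1 0 (by simpa using i0) (by simpa using i1) (by simpa using i2)).1
  exact hl.not_isUnit (isUnit_of_dvd_one this)

theorem bezout3 (a b c : ℤ) (H : ∀ l : ℤ, Prime l → 2 ≤ l → l ∣ a → l ∣ b → l ∣ c → False)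
    (k : ℤ) : ∃ x y z : ℤ, a * x + b * y + c * z = k := by
  have h1 : Int.gcd a (Int.gcd b c) = 1 := by
    by_contra hne
    obtain ⟨l, hl, hd⟩ := Nat.exists_prime_and_dvd hne
    have hd' : (l : ℤ) ∣ Int.gcd a (Int.gcd b c) := by exact_mod_cast hd
    have h2 : (l : ℤ) ∣ Int.gcd b c := hd'.trans (Int.gcd_dvd_right _ _)
    exact H l (Nat.prime_iff_prime_int.1 hl) (by exact_mod_cast hl.two_le)
      (hd'.trans (Int.gcd_dvd_left _ _)) (h2.trans (Int.gcd_dvd_left _ _))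
      (h2.trans (Int.gcd_dvd_right _ _))
  have e1 := Int.gcd_eq_gcd_ab a (Int.gcd b c)
  have e2 := Int.gcd_eq_gcd_ab b c
  rw [h1] at e1
  set u := Int.gcdA a (Int.gcd b c)
  set v := Int.gcdB a (Int.gcd b c)
  refine ⟨k * u, k * v * Int.gcdA b c, k * v * Int.gcdB b c, ?_⟩
  push_cast at e1
  linear_combination (-k) * e1 - k * v * e2

theorem core (α₁ α₂ ζ : ℝ) (p q : ℤ × ℤ × ℤ) (σ : ℤ) (hσ : σ = 1 ∨ σ = -1)
    (hadm : ∀ n : ℤ × ℤ × ℤ, 0 < hgt n → hgt n < hgt q → ζ ≤ |zform α₁ α₂ n|)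
    (h0 : ∀ n : ℤ × ℤ × ℤ, hgt n = 0 → |zform α₁ α₂ n| < ζ → n = 0)
    (hp : σ * zform α₁ α₂ p = ζ) (hq : σ * zform α₁ α₂ q < ζ) (hq0 : 0 < σ * zform α₁ α₂ q)
    (hpq : hgt p < hgt q) (hp0 : 0 < hgt p)
    (hqX : q.2.2 = hgt q) (hqn : q.2.1 ≤ 0) :
    ∃ w : ℤ × ℤ × ℤ, (hgt q : ℝ) ≤ w.2.1 ∧ (hgt q : ℝ) ≤ w.2.2 ∧
      (w.2.1 : ℝ) ≤ 3 * hgt q + 1 / (hgt q * ζ) ∧ (w.2.2 : ℝ) ≤ 3 * hgt q + 1 / (hgt q * ζ) ∧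
      |zform α₁ α₂ w| ≤ ζ := by
  have hσ2 : (σ : ℝ) * σ = 1 := by rcases hσ with h | h <;> rw [h] <;> norm_num
  have hσa : |(σ : ℝ)| = 1 := by rcases hσ with h | h <;> rw [h] <;> norm_num
  have hζ : 0 < ζ := hq0.trans hq
  have hpa : |zform α₁ α₂ p| = ζ := by
    rw [← abs_of_pos hζ, ← hp, abs_mul, hσa, one_mul]
  have hqe : |zform α₁ α₂ q| = σ * zform α₁ α₂ q := by
    rw [← abs_of_pos hq0, abs_mul, hσa, one_mul]
  have hqa : |zform α₁ α₂ q| < ζ := by rw [hqe]; exact hq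
  set zp := zform α₁ α₂ p with hzp
  set zq := zform α₁ α₂ q with hzq
  set X : ℝ := (hgt q : ℝ) with hX
  have hX0 : 0 < X := by rw [hX]; exact_mod_cast hp0.trans hpq
  have hq2 : (q.2.2 : ℝ) = X := by rw [hX]; exact_mod_cast hqX
  have hq1 : (q.2.1 : ℝ) ≤ 0 := by exact_mod_cast hqn
  have hqh : |q.2.1| ≤ hgt q := le_max_left _ _
  have hq1X : |(q.2.1 : ℝ)| ≤ X := by rw [hX]; exact_mod_cast hqh
  have hp1 : |p.2.1| < hgt q := lt_of_le_of_lt (le_max_left _ _) hpq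
  have hp2 : |p.2.2| < hgt q := lt_of_le_of_lt (le_max_right _ _) hpq
  have hp1X : |(p.2.1 : ℝ)| < X := by rw [hX]; exact_mod_cast hp1
  have hp2X : |(p.2.2 : ℝ)| < X := by rw [hX]; exact_mod_cast hp2
  set η : ℝ := σ * zq with hη
  set C1 : ℝ := ζ * X - p.2.2 * η with hC1
  set C2 : ℝ := -ζ * q.2.1 + p.2.1 * η with hC2
  have hC1pos : 0 < C1 := by
    rw [abs_lt] at hp2X
    rw [hC1]; nlinarith
  have hδ : ∀ θ : ℝ, 0 ≤ θ → θ ≤ 1 → ∃ δ1 δ2 : ℝ, 0 ≤ δ1 ∧ 0 ≤ δ2 ∧ δ1 ≤ 1 / (X * ζ) ∧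
      δ2 ≤ 1 / (X * ζ) ∧ C1 * δ1 + C2 * δ2 = θ := by
    intro θ ht0 ht1
    rcases le_or_gt p.2.2 0 with hle | hgt0
    · have : (p.2.2 : ℝ) ≤ 0 := by exact_mod_cast hle
      refine ⟨θ / C1, 0, by positivity, le_rfl, ?_, by positivity, by field_simp; ring⟩
      have : X * ζ ≤ C1 := by rw [hC1]; nlinarith
      gcongr
    · have hge : hgt q ≤ p.2.1 - q.2.1 := by
        have hz : zform α₁ α₂ (q.1 - p.1, q.2.1 - p.2.1, q.2.2 - p.2.2) = zq - zp := by
          simp only [hzp, hzq, zform]; push_cast; ring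
        rw [abs_lt] at hp1 hp2
        by_contra hcon
        push Not at hcon
        have := hadm (q.1 - p.1, q.2.1 - p.2.1, q.2.2 - p.2.2)
          (lt_of_lt_of_le (abs_pos.2 (by simp only; omega)) (le_max_right _ _))
          (by apply max_lt <;> rw [abs_lt] <;> constructor <;> simp only <;> omega)
        rw [hz] at this
        have h2 : |zq - zp| = ζ - η := by
          rw [← one_mul |zq - zp|, ← hσa, ← abs_mul, mul_sub, hp, abs_sub_comm,
            abs_of_pos (by linarith)]
        linarith
      have hger : X ≤ p.2.1 - q.2.1 := by rw [hX]; exact_mod_cast hge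
      rw [abs_lt] at hp2X
      rw [abs_le] at hq1X
      have hS : X * ζ ≤ C1 + C2 := by rw [hC1, hC2]; nlinarith
      have hS0 : 0 < C1 + C2 := lt_of_lt_of_le (by positivity) hS
      have hb : θ / (C1 + C2) ≤ 1 / (X * ζ) := by gcongr
      refine ⟨θ / (C1 + C2), θ / (C1 + C2), by positivity, by positivity, hb, hb, by field_simp⟩
  obtain ⟨δ1, δ2, d1, d2, d3, d4, d5⟩ := hδ (⌈2 * X * (C1 + C2)⌉ - 2 * X * (C1 + C2))
    (by linarith [Int.le_ceil (2 * X * (C1 + C2))])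
    (by linarith [Int.ceil_lt_add_one (2 * X * (C1 + C2))])
  set k : ℤ := ⌈2 * X * (C1 + C2)⌉
  obtain ⟨w0, w1, w2, hw⟩ := bezout3 (p.2.1 * q.2.2 - p.2.2 * q.2.1)
    (p.2.2 * q.1 - p.1 * q.2.2) (p.1 * q.2.1 - p.2.1 * q.1)
    (fun l hl hl2 => prim α₁ α₂ ζ p q hadm h0 hpa hqa hpq hp0 l hl hl2) (-σ * k)
  have hwR : ((p.2.1 : ℝ) * q.2.2 - p.2.2 * q.2.1) * w0 + (p.2.2 * q.1 - p.1 * q.2.2) * w1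
      + (p.1 * q.2.1 - p.2.1 * q.1) * w2 = -σ * k := by exact_mod_cast hw
  set zw : ℝ := zform α₁ α₂ (w0, w1, w2) with hzw
  set y1 : ℝ := w1 - (2 * X + δ1) with hy1
  set y2 : ℝ := w2 - (2 * X + δ2) with hy2
  set n0 : ℝ := (p.2.1 : ℝ) * X - p.2.2 * q.2.1 with hn0
  set Q : ℝ := zp * X - p.2.2 * zq with hQ
  have hzpσ : zp = σ * ζ := by rw [← hp, ← mul_assoc, hσ2, one_mul]
  have hzqσ : zq = σ * η := by rw [hη, ← mul_assoc, hσ2, one_mul]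
  have hQC : Q = σ * C1 := by rw [hQ, hC1, hzpσ, hzqσ]; ring
  have hRC : zp * q.2.1 - p.2.1 * zq = -σ * C2 := by rw [hC2, hzpσ, hzqσ]; ring
  have hQ0 : Q ≠ 0 := by
    rw [hQC]; apply mul_ne_zero _ hC1pos.ne'
    intro h; rw [h] at hσ2; norm_num at hσ2
  have hdet : zw * n0 - Q * w1 + (zp * q.2.1 - p.2.1 * zq) * w2 = -σ * k := by
    rw [← hwR, hn0, hQ, ← hq2]
    simp only [hzw, hzp, hzq, zform]; ring
  have hflat : zw * n0 - Q * y1 + (zp * q.2.1 - p.2.1 * zq) * y2 = 0 := by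
    rw [hRC] at hdet ⊢
    rw [hy1, hy2]
    rw [hQC] at hdet ⊢
    linear_combination hdet + σ * d5
  set a : ℝ := (zw * X - y2 * zq) / Q with ha
  set b : ℝ := (zp * y2 - p.2.2 * zw) / Q with hb
  have E1 : a * p.2.1 + b * q.2.1 = y1 := by
    rw [ha, hb]; field_simp; rw [hn0] at hflat; linear_combination hflat
  have E2 : a * p.2.2 + b * X = y2 := by
    rw [ha, hb]; field_simp; rw [hQ]; ring
  have E3 : a * zp + b * zq = zw := by
    rw [ha, hb]; field_simp; rw [hQ]; ring
  have ra := abs_sub_round a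
  have rb := abs_sub_round b
  set a' : ℝ := a - round a with ha'
  set b' : ℝ := b - round b with hb'
  have bnd : ∀ u v : ℝ, |u| ≤ X → |v| ≤ X → |a' * u + b' * v| ≤ X := by
    intro u v hu hv
    calc _ ≤ |a'| * |u| + |b'| * |v| := by rw [← abs_mul, ← abs_mul]; exact abs_add_le _ _
      _ ≤ 1 / 2 * X + 1 / 2 * X := by gcongr
      _ = X := by ring
  have B1 := bnd _ _ hp1X.le hq1X
  have B2 := bnd (p.2.2) X hp2X.le (by rw [abs_of_pos hX0])
  rw [abs_le] at B1 B2
  have X1 : (w1 : ℝ) - round a * p.2.1 - round b * q.2.1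
      = 2 * X + δ1 + (a' * p.2.1 + b' * q.2.1) := by
    rw [ha', hb']; linear_combination hy1 - E1
  have X2 : (w2 : ℝ) - round a * p.2.2 - round b * q.2.2
      = 2 * X + δ2 + (a' * p.2.2 + b' * X) := by
    rw [ha', hb', hq2]; linear_combination hy2 - E2
  refine ⟨(w0 - round a * p.1 - round b * q.1, w1 - round a * p.2.1 - round b * q.2.1,
    w2 - round a * p.2.2 - round b * q.2.2), ?_, ?_, ?_, ?_, ?_⟩
  · push_cast; rw [X1]; linarith
  · push_cast; rw [X2]; linarith
  · push_cast; rw [X1]; linarith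
  · push_cast; rw [X2]; linarith
  · have : zform α₁ α₂ (w0 - round a * p.1 - round b * q.1, w1 - round a * p.2.1 - round b * q.2.1,
      w2 - round a * p.2.2 - round b * q.2.2) = a' * zp + b' * zq := by
      have : a' * zp + b' * zq = zw - round a * zp - round b * zq := by
        rw [ha', hb']; linear_combination E3
      rw [this]
      simp only [hzw, hzp, hzq, zform]; push_cast; ring
    rw [this]
    calc _ ≤ |a'| * |zp| + |b'| * |zq| := by rw [← abs_mul, ← abs_mul]; exact abs_add_le _ _
      _ ≤ 1 / 2 * ζ + 1 / 2 * ζ := by rw [hpa]; gcongr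
      _ = ζ := by ring

theorem hgt_neg (n : ℤ × ℤ × ℤ) : hgt (-n) = hgt n := by simp [hgt]

theorem zform_neg (α₁ α₂ : ℝ) (n : ℤ × ℤ × ℤ) : zform α₁ α₂ (-n) = -zform α₁ α₂ n := by
  simp only [zform, Prod.fst_neg, Prod.snd_neg]; push_cast; ring

/-- the core lemma without sign normalization of `p` -/
theorem core2 (α₁ α₂ ζ : ℝ) (p q : ℤ × ℤ × ℤ)
    (hadm : ∀ n : ℤ × ℤ × ℤ, 0 < hgt n → hgt n < hgt q → ζ ≤ |zform α₁ α₂ n|)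
    (h0 : ∀ n : ℤ × ℤ × ℤ, hgt n = 0 → |zform α₁ α₂ n| < ζ → n = 0)
    (hp : |zform α₁ α₂ p| = ζ) (hq : |zform α₁ α₂ q| < ζ) (hq0 : zform α₁ α₂ q ≠ 0)
    (hpq : hgt p < hgt q) (hp0 : 0 < hgt p)
    (hqX : q.2.2 = hgt q) (hqn : q.2.1 ≤ 0) :
    ∃ w : ℤ × ℤ × ℤ, (hgt q : ℝ) ≤ w.2.1 ∧ (hgt q : ℝ) ≤ w.2.2 ∧
      (w.2.1 : ℝ) ≤ 3 * hgt q + 1 / (hgt q * ζ) ∧ (w.2.2 : ℝ) ≤ 3 * hgt q + 1 / (hgt q * ζ) ∧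
      |zform α₁ α₂ w| ≤ ζ := by
  have hs : ∃ σ : ℤ, (σ = 1 ∨ σ = -1) ∧ σ * zform α₁ α₂ q = |zform α₁ α₂ q| := by
    rcases abs_cases (zform α₁ α₂ q) with h | h
    · exact ⟨1, Or.inl rfl, by rw [h.1]; simp⟩
    · exact ⟨-1, Or.inr rfl, by rw [h.1]; simp⟩
  obtain ⟨σ, hσ, hσq⟩ := hs
  have hq0' := abs_pos.2 hq0
  have hp' : σ * zform α₁ α₂ p = ζ ∨ σ * zform α₁ α₂ (-p) = ζ := by
    rw [zform_neg, ← hp]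
    rcases abs_cases (zform α₁ α₂ p) with h | h <;> rw [h.1] <;>
      rcases hσ with h | h <;> rw [h] <;> simp
  rcases hp' with h | h
  · exact core α₁ α₂ ζ p q σ hσ hadm h0 h (by rw [hσq]; exact hq) (by rw [hσq]; exact hq0')
      hpq hp0 hqX hqn
  · exact core α₁ α₂ ζ (-p) q σ hσ hadm h0 h (by rw [hσq]; exact hq) (by rw [hσq]; exact hq0')
      (by rw [hgt_neg]; exact hpq) (by rw [hgt_neg]; exact hp0) hqX hqn

theorem core3 (α₁ α₂ ζ : ℝ) (p q : ℤ × ℤ × ℤ)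
    (hadm : ∀ n : ℤ × ℤ × ℤ, 0 < hgt n → hgt n < hgt q → ζ ≤ |zform α₁ α₂ n|)
    (h0 : ∀ n : ℤ × ℤ × ℤ, hgt n = 0 → |zform α₁ α₂ n| < ζ → n = 0)
    (hp : |zform α₁ α₂ p| = ζ) (hq : |zform α₁ α₂ q| < ζ) (hq0 : zform α₁ α₂ q ≠ 0)
    (hpq : hgt p < hgt q) (hp0 : 0 < hgt p)
    (hqX : |q.2.2| = hgt q) (hqn : q.2.1 * q.2.2 ≤ 0) :
    ∃ w : ℤ × ℤ × ℤ, (hgt q : ℝ) ≤ w.2.1 ∧ (hgt q : ℝ) ≤ w.2.2 ∧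
      (w.2.1 : ℝ) ≤ 3 * hgt q + 1 / (hgt q * ζ) ∧ (w.2.2 : ℝ) ≤ 3 * hgt q + 1 / (hgt q * ζ) ∧
      |zform α₁ α₂ w| ≤ ζ := by
  have hpos : 0 < hgt q := hp0.trans hpq
  rcases abs_cases q.2.2 with h | h
  · exact core2 α₁ α₂ ζ p q hadm h0 hp hq hq0 hpq hp0 (by omega)
      (by
        have : 0 < q.2.2 := by omega
        by_contra hcon
        push Not at hcon
        nlinarith)
  · rw [← hgt_neg q] at *
    exact core2 α₁ α₂ ζ p (-q) hadm h0 hp (by rw [zform_neg, abs_neg]; exact hq)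
      (by rw [zform_neg]; exact neg_ne_zero.2 hq0) hpq hp0
      (by simp only [Prod.snd_neg]; omega)
      (by
        simp only [Prod.snd_neg, Prod.fst_neg]
        by_contra hcon
        push Not at hcon
        nlinarith)

def swp (n : ℤ × ℤ × ℤ) : ℤ × ℤ × ℤ := (n.1, n.2.2, n.2.1)

theorem hgt_swp (n : ℤ × ℤ × ℤ) : hgt (swp n) = hgt n := by simp [hgt, swp, max_comm]

theorem zform_swp (α₁ α₂ : ℝ) (n : ℤ × ℤ × ℤ) : zform α₂ α₁ n = zform α₁ α₂ (swp n) := by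
  simp only [zform, swp]; ring

theorem core4 (α₁ α₂ ζ : ℝ) (p q : ℤ × ℤ × ℤ)
    (hadm : ∀ n : ℤ × ℤ × ℤ, 0 < hgt n → hgt n < hgt q → ζ ≤ |zform α₁ α₂ n|)
    (h0 : ∀ n : ℤ × ℤ × ℤ, hgt n = 0 → |zform α₁ α₂ n| < ζ → n = 0)
    (hp : |zform α₁ α₂ p| = ζ) (hq : |zform α₁ α₂ q| < ζ) (hq0 : zform α₁ α₂ q ≠ 0)
    (hpq : hgt p < hgt q) (hp0 : 0 < hgt p) (hqn : q.2.1 * q.2.2 ≤ 0) :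
    ∃ w : ℤ × ℤ × ℤ, (hgt q : ℝ) ≤ w.2.1 ∧ (hgt q : ℝ) ≤ w.2.2 ∧
      (w.2.1 : ℝ) ≤ 3 * hgt q + 1 / (hgt q * ζ) ∧ (w.2.2 : ℝ) ≤ 3 * hgt q + 1 / (hgt q * ζ) ∧
      |zform α₁ α₂ w| ≤ ζ := by
  rcases max_choice |q.2.1| |q.2.2| with h | h
  · have hsp : swp (swp p) = p := rfl
    have hsq : swp (swp q) = q := rfl
    obtain ⟨w, h1, h2, h3, h4, h5⟩ := core3 α₂ α₁ ζ (swp p) (swp q)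
      (fun n a b => by
        rw [zform_swp]; exact hadm _ (by rwa [hgt_swp]) (by rwa [hgt_swp, ← hgt_swp q]))
      (fun n a b => by
        rw [zform_swp] at b
        have := h0 _ (by rwa [hgt_swp]) b
        have h' : swp (swp n) = swp 0 := by rw [this]
        exact h')
      (by rw [zform_swp, hsp]; exact hp) (by rw [zform_swp, hsq]; exact hq)
      (by rw [zform_swp, hsq]; exact hq0) (by rwa [hgt_swp, hgt_swp]) (by rwa [hgt_swp])
      (by rw [hgt_swp]; exact h.symm) (by simp only [swp]; linarith)
    rw [hgt_swp] at h1 h2 h3 h4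
    rw [zform_swp] at h5
    exact ⟨swp w, h2, h1, h4, h3, h5⟩
  · exact core3 α₁ α₂ ζ p q hadm h0 hp hq hq0 hpq hp0 h.symm hqn

theorem nint_le (α₁ α₂ : ℝ) (w : ℤ × ℤ × ℤ) :
    nint (α₁ * w.2.1 + α₂ * w.2.2) ≤ |zform α₁ α₂ w| := by
  have := round_le (α₁ * w.2.1 + α₂ * w.2.2 : ℝ) (-w.1)
  have e2 : zform α₁ α₂ w = α₁ * w.2.1 + α₂ * w.2.2 - ((-w.1 : ℤ) : ℝ) := by
    simp only [zform]; push_cast; ring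
  rw [e2]; exact this

/-- Corollary 2: with A_ν = M_ν^{1/τ}/120, if ζ_ν ≥ A_ν·M_{ν+1}^{−τ/(τ−1)} then there is an
integer point with positive coordinates, M_{ν+1} ≤ max{x₁⁰,x₂⁰} ≤ 2M_{ν+1}^τ·A_ν⁻¹, and
‖α₁x₁⁰+α₂x₂⁰‖ ≤ 24^τ·M_ν^{(1−τ)/τ}·(max{x₁⁰,x₂⁰})^{−τ}. -/
theorem corollary2 (α₁ α₂ : ℝ) (h : ZLinIndep α₁ α₂)
    (m m' : ℤ × ℤ × ℤ) (hc : ConsecutiveBest α₁ α₂ m m')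
    (hz : (hgt m : ℝ) ^ (1 / tau) / 120 * (hgt m' : ℝ) ^ (-(tau / (tau - 1)))
            ≤ |zform α₁ α₂ m|) :
    ∃ x : ℤ × ℤ, 0 < x.1 ∧ 0 < x.2 ∧
      (hgt m' : ℝ) ≤ ((max x.1 x.2 : ℤ) : ℝ) ∧
      ((max x.1 x.2 : ℤ) : ℝ) ≤ 2 * (hgt m' : ℝ) ^ tau * ((hgt m : ℝ) ^ (1 / tau) / 120)⁻¹ ∧
      nint (α₁ * x.1 + α₂ * x.2) ≤
        24 ^ tau * (hgt m : ℝ) ^ ((1 - tau) / tau) * ((max x.1 x.2 : ℤ) : ℝ) ^ (-tau) := by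
  have hadm := adm α₁ α₂ m m' hc
  obtain ⟨hm, hm', hlt, -⟩ := hc
  have hM := hm.1
  have hzero : ∀ n : ℤ × ℤ × ℤ, zform α₁ α₂ n = 0 → n = 0 := by
    intro n hn
    obtain ⟨a, b, c⟩ := h n.1 n.2.1 n.2.2 hn
    exact Prod.ext a (Prod.ext b c)
  have hgt0 : hgt 0 = 0 := by simp [hgt]
  have hm0 : zform α₁ α₂ m ≠ 0 := by
    intro h1; rw [hzero m h1, hgt0] at hM; omega
  have hm0' : zform α₁ α₂ m' ≠ 0 := by
    intro h1
    have := hm'.1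
    rw [hzero m' h1, hgt0] at this; omega
  have hle : |zform α₁ α₂ m'| ≤ |zform α₁ α₂ m| := hm'.2 m hM hlt.le
  have hne : |zform α₁ α₂ m'| ≠ |zform α₁ α₂ m| := by
    intro heq
    rcases abs_eq_abs.1 heq with h1 | h1
    · have h2 := zform_lin α₁ α₂ 1 (-1) m m'
      push_cast at h2
      rw [h1] at h2
      have h3 := hzero _ (h2.trans (by ring))
      simp only [Prod.mk_eq_zero] at h3
      have : m = m' := Prod.ext (by omega) (Prod.ext (by omega) (by omega))
      rw [this] at hlt; omega
    · have h2 := zform_lin α₁ α₂ 1 1 m m'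
      push_cast at h2
      rw [h1] at h2
      have h3 := hzero _ (h2.trans (by ring))
      simp only [Prod.mk_eq_zero] at h3
      have : m = -m' := Prod.ext (by simp; omega)
        (Prod.ext (by simp; omega) (by simp; omega))
      rw [this, hgt_neg] at hlt; omega
  have hlt' := lt_of_le_of_ne hle hne
  set ζ := |zform α₁ α₂ m| with hζ
  have hζ0 : 0 < ζ := abs_pos.2 hm0
  have hhalf : ζ ≤ 1 / 2 := by
    have h1 := hm.2 (-round α₁, 1, 0) (by simp [hgt]) (by
      have h3 : hgt (-round α₁, 1, 0) = 1 := by simp [hgt]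
      rw [h3]; exact hM)
    have h2 : zform α₁ α₂ (-round α₁, 1, 0) = α₁ - round α₁ := by
      simp only [zform]; push_cast; ring
    rw [h2] at h1
    exact h1.trans (abs_sub_round α₁)
  have h0 : ∀ n : ℤ × ℤ × ℤ, hgt n = 0 → |zform α₁ α₂ n| < ζ → n = 0 := by
    intro n hn hz
    have h1 : |n.2.1| ≤ 0 := hn ▸ le_max_left _ _
    have h2 : |n.2.2| ≤ 0 := hn ▸ le_max_right _ _
    rw [abs_nonpos_iff] at h1 h2
    have h3 : |(n.1 : ℝ)| < 1 := by
      simp only [zform, h1, h2] at hz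
      simp at hz
      linarith
    have h4 : |n.1| < 1 := by exact_mod_cast h3
    exact Prod.ext (Int.abs_lt_one_iff.1 h4) (Prod.ext h1 h2)
  have hζX := pigeon α₁ α₂ ζ (hgt m') (by omega) hadm
  have hX0 : 0 < hgt m' := hm'.1
  have hX0r : (0 : ℝ) < hgt m' := by exact_mod_cast hX0
  have main : ∃ w : ℤ × ℤ × ℤ, 0 < w.2.1 ∧ 0 < w.2.2 ∧ hgt m' ≤ max w.2.1 w.2.2 ∧
      ((max w.2.1 w.2.2 : ℤ) : ℝ) ≤ 3 * hgt m' + 1 / (hgt m' * ζ) ∧ |zform α₁ α₂ w| ≤ ζ := by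
    have hD : 0 < 1 / (hgt m' * ζ) := by positivity
    rcases le_or_gt (m'.2.1 * m'.2.2) 0 with hs | hs
    · obtain ⟨w, h1, h2, h3, h4, h5⟩ := core4 α₁ α₂ ζ m m' hadm h0 rfl hlt' hm0' hlt hM hs
      have h1' : hgt m' ≤ w.2.1 := by exact_mod_cast h1
      have h2' : hgt m' ≤ w.2.2 := by exact_mod_cast h2
      refine ⟨w, by omega, by omega, le_max_of_le_left h1', ?_, h5⟩
      push_cast
      exact max_le h3 h4
    · rcases pos_and_pos_or_neg_and_neg_of_mul_pos hs with h1 | h1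
      · have e : max m'.2.1 m'.2.2 = hgt m' := by
          simp only [hgt]; rw [abs_of_pos h1.1, abs_of_pos h1.2]
        refine ⟨m', h1.1, h1.2, e.ge, ?_, hlt'.le⟩
        rw [e]; linarith
      · have e : max (-m').2.1 (-m').2.2 = hgt m' := by
          simp only [hgt, Prod.snd_neg, Prod.fst_neg]
          rw [abs_of_neg h1.1, abs_of_neg h1.2]
        refine ⟨-m', by simp; exact h1.1, by simp; exact h1.2, e.ge, ?_, ?_⟩
        · rw [e]; linarith
        · rw [zform_neg, abs_neg]; exact hlt'.le
  obtain ⟨w, w1, w2, w3, w4, w5⟩ := main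
  have w3' : (hgt m' : ℝ) ≤ ((max w.2.1 w.2.2 : ℤ) : ℝ) := by exact_mod_cast w3
  obtain ⟨n1, n2⟩ := numeric (hgt m) (hgt m') ζ _ (by omega) hlt hζ0 hζX hz w3' w4
  exact ⟨w.2, w1, w2, w3', n1, (nint_le α₁ α₂ w).trans (w5.trans n2)⟩
end

section
/- Let 1, α₁, α₂ be linearly independent over ℤ and let m_{ν−1}, m_ν, m_{ν+1} be consecutive best approximations such that the determinant of the 3×3 matrix with rows m_{ν−1}, m_ν, m_{ν+1} is nonzero. Suppose ζ_ν ≤ (8·M_{ν−1}·M_{ν+1})^{−1} and ζ_{ν+1} ≤ (8·M_{ν−1}·M_ν)^{−1}. Then D_ν := |m_{1,ν}·m_{2,ν+1} − m_{2,ν}·m_{1,ν+1}| satisfies D_ν ≥ (2·ζ_{ν−1})^{−1}, and consequently D_ν ≥ M_ν²/2. -/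
lemma aux_dirichlet (α₁ α₂ : ℝ) (M : ℕ) (hM : 2 ≤ M) :
    ∃ n : ℤ × ℤ × ℤ, 0 < hgt n ∧ hgt n ≤ (M : ℤ) - 1 ∧
      |zform α₁ α₂ n| * (M : ℝ) ^ 2 ≤ 1 := by
  by_contra! hcon
  have hMR : (2 : ℝ) ≤ M := by exact_mod_cast hM
  have hNpos : (0 : ℝ) < (M : ℝ) ^ 2 := by positivity
  have hMZ : (2 : ℤ) ≤ M := by exact_mod_cast hM
  let x : ℤ × ℤ → ℝ := fun p => p.1 * α₁ + p.2 * α₂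
  let f : ℤ × ℤ → ℤ := fun p => ⌊(M : ℝ) ^ 2 * Int.fract (x p)⌋
  let S : Finset (ℤ × ℤ) := (Finset.Ico (0 : ℤ) M ×ˢ Finset.Ico (0 : ℤ) M).erase (0, 0)
  let T : Finset ℤ := Finset.Icc 1 ((M : ℤ) ^ 2 - 2)
  have hScard : S.card = M ^ 2 - 1 := by
    have h0 : ((0, 0) : ℤ × ℤ) ∈ (Finset.Ico (0 : ℤ) M ×ˢ Finset.Ico (0 : ℤ) M) := by
      simp; omega
    simp only [S]
    rw [Finset.card_erase_of_mem h0, Finset.card_product]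
    simp [sq]
  have hTcard : T.card < S.card := by
    rw [hScard]
    simp only [T, Int.card_Icc]
    have : 4 ≤ M ^ 2 := by nlinarith
    zify [show 1 ≤ M ^ 2 by omega]
    have : (4 : ℤ) ≤ (M : ℤ) ^ 2 := by exact_mod_cast this
    omega
  have hmaps : ∀ p ∈ S, f p ∈ T := by
    rintro ⟨p, q⟩ hp
    simp only [S, Finset.mem_erase, Finset.mem_product, Finset.mem_Ico, ne_eq, Prod.mk.injEq] at hp
    obtain ⟨hne, ⟨hp0, hp1⟩, hq0, hq1⟩ := hp
    have hh : ∀ k : ℤ, 1 < |zform α₁ α₂ (k, p, q)| * (M : ℝ) ^ 2 := by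
      intro k
      apply hcon
      · simp only [hgt, lt_max_iff, abs_pos]
        omega
      · simp only [hgt, max_le_iff, abs_of_nonneg hp0, abs_of_nonneg hq0]
        omega
    have hfr : Int.fract (x (p, q)) = x (p, q) - ⌊x (p, q)⌋ := rfl
    have hf0 := Int.fract_nonneg (x (p, q))
    have hf1 := Int.fract_lt_one (x (p, q))
    have e0 : zform α₁ α₂ (-⌊x (p, q)⌋, p, q) = Int.fract (x (p, q)) := by
      rw [hfr]; simp only [zform, x]; push_cast; ring
    have e1 : zform α₁ α₂ (-⌊x (p, q)⌋ - 1, p, q) = Int.fract (x (p, q)) - 1 := by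
      rw [hfr]; simp only [zform, x]; push_cast; ring
    have g0 := hh (-⌊x (p, q)⌋)
    have g1 := hh (-⌊x (p, q)⌋ - 1)
    rw [e0, abs_of_nonneg hf0] at g0
    rw [e1, abs_of_neg (by linarith)] at g1
    simp only [T, f, Finset.mem_Icc]
    constructor
    · rw [Int.le_floor]; push_cast; nlinarith
    · have : ⌊(M : ℝ) ^ 2 * Int.fract (x (p, q))⌋ < (M : ℤ) ^ 2 - 1 := by
        rw [Int.floor_lt]; push_cast; nlinarith
      omega
  obtain ⟨⟨p, q⟩, hp, ⟨r, s⟩, hr, hne, hfe⟩ :=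
    Finset.exists_ne_map_eq_of_card_lt_of_maps_to hTcard hmaps
  simp only [S, Finset.mem_erase, Finset.mem_product, Finset.mem_Ico, ne_eq, Prod.mk.injEq]
    at hp hr hne
  have key := hcon (-⌊x (p, q)⌋ + ⌊x (r, s)⌋, p - r, q - s) (by
      simp only [hgt, lt_max_iff, abs_pos]; omega) (by
      simp only [hgt, max_le_iff, abs_le]; omega)
  have e : zform α₁ α₂ (-⌊x (p, q)⌋ + ⌊x (r, s)⌋, p - r, q - s)
      = Int.fract (x (p, q)) - Int.fract (x (r, s)) := by
    rw [Int.fract, Int.fract]; simp only [zform, x]; push_cast; ring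
  have hlt := Int.abs_sub_lt_one_of_floor_eq_floor hfe
  rw [← mul_sub, abs_mul, abs_of_pos hNpos] at hlt
  rw [e] at key
  linarith

lemma aux_min (α₁ α₂ : ℝ) (a b : ℤ × ℤ × ℤ) (hab : ConsecutiveBest α₁ α₂ a b)
    (n : ℤ × ℤ × ℤ) (hn0 : 0 < hgt n) (hn : hgt n ≤ hgt b - 1) :
    |zform α₁ α₂ a| ≤ |zform α₁ α₂ n| := by
  obtain ⟨ha, hb, hlt, hcons⟩ := hab
  let M := hgt b
  let R : ℤ × ℤ → ℤ := fun p => -round ((p.1 : ℝ) * α₁ + p.2 * α₂)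
  let B : Finset (ℤ × ℤ) :=
    (Finset.Icc (-(M - 1)) (M - 1) ×ˢ Finset.Icc (-(M - 1)) (M - 1)).erase (0, 0)
  have hB : ∀ m : ℤ × ℤ × ℤ, m.2 ∈ B ↔ 0 < hgt m ∧ hgt m ≤ M - 1 := by
    rintro ⟨m, p, q⟩
    simp only [B, Finset.mem_erase, Finset.mem_product, Finset.mem_Icc, ne_eq, Prod.mk.injEq,
      hgt, lt_max_iff, abs_pos, max_le_iff, abs_le]
    omega
  obtain ⟨p, hpB, hp⟩ := Finset.exists_min_image B
    (fun p => |zform α₁ α₂ (R p, p.1, p.2)|) ⟨n.2, (hB n).2 ⟨hn0, hn⟩⟩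
  have hall : ∀ m : ℤ × ℤ × ℤ, 0 < hgt m → hgt m ≤ M - 1 →
      |zform α₁ α₂ (R p, p.1, p.2)| ≤ |zform α₁ α₂ m| := by
    intro m h0 h1
    refine (hp m.2 ((hB m).2 ⟨h0, h1⟩)).trans ?_
    have := round_le ((m.2.1 : ℝ) * α₁ + m.2.2 * α₂) (-m.1)
    simp only [zform, R]
    push_cast at this ⊢
    calc _ = _ := by congr 1; ring
      _ ≤ _ := this
      _ = _ := by congr 1; ring
  have hpp := (hB (R p, p.1, p.2)).1 hpB
  have hbest : IsBestApprox α₁ α₂ (R p, p.1, p.2) :=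
    ⟨hpp.1, fun m h0 h1 => hall m h0 (h1.trans hpp.2)⟩
  have h3 : hgt (R p, p.1, p.2) ≤ hgt a := by
    rcases hcons _ hbest with h | h
    · exact h
    · have := hpp.2
      simp only [M] at this
      omega
  exact (ha.2 _ hpp.1 h3).trans (hall n hn0 hn)

lemma aux_minor (u v : ℤ × ℤ × ℤ) :
    |(u.2.1 : ℝ) * v.2.2 - u.2.2 * v.2.1| ≤ 2 * (hgt u : ℝ) * (hgt v : ℝ) := by
  have hu1 : |(u.2.1 : ℝ)| ≤ hgt u := by exact_mod_cast le_max_left |u.2.1| |u.2.2|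
  have hu2 : |(u.2.2 : ℝ)| ≤ hgt u := by exact_mod_cast le_max_right |u.2.1| |u.2.2|
  have hv1 : |(v.2.1 : ℝ)| ≤ hgt v := by exact_mod_cast le_max_left |v.2.1| |v.2.2|
  have hv2 : |(v.2.2 : ℝ)| ≤ hgt v := by exact_mod_cast le_max_right |v.2.1| |v.2.2|
  have hu0 := (abs_nonneg _).trans hu1
  have e1 := mul_le_mul hu1 hv2 (abs_nonneg _) hu0
  have e2 := mul_le_mul hu2 hv1 (abs_nonneg _) hu0
  have := abs_sub ((u.2.1 : ℝ) * v.2.2) (u.2.2 * v.2.1)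
  rw [abs_mul, abs_mul] at this
  linarith

lemma aux_quarter (z d A C : ℝ) (hA : 0 < A) (hC : 0 < C) (hz : |z| ≤ (8 * A * C)⁻¹)
    (hd : |d| ≤ 2 * A * C) : |z * d| ≤ 1 / 4 := by
  rw [abs_mul]
  calc |z| * |d| ≤ (8 * A * C)⁻¹ * (2 * A * C) :=
        mul_le_mul hz hd (abs_nonneg _) (by positivity)
    _ = 1 / 4 := by field_simp; norm_num

/-- Under the hypotheses of Lemma 2, D_ν = |m_{1,ν}m_{2,ν+1} − m_{2,ν}m_{1,ν+1}| satisfies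
D_ν ≥ (2ζ_{ν−1})⁻¹ and consequently D_ν ≥ M_ν²/2. -/
theorem lemma2_det_bound (α₁ α₂ : ℝ) (h : ZLinIndep α₁ α₂)
    (a b c : ℤ × ℤ × ℤ)
    (hab : ConsecutiveBest α₁ α₂ a b) (hbc : ConsecutiveBest α₁ α₂ b c)
    (hdet : Matrix.det !![a.1, a.2.1, a.2.2; b.1, b.2.1, b.2.2; c.1, c.2.1, c.2.2] ≠ 0)
    (h1 : |zform α₁ α₂ b| ≤ (8 * (hgt a : ℝ) * (hgt c : ℝ))⁻¹)
    (h2 : |zform α₁ α₂ c| ≤ (8 * (hgt a : ℝ) * (hgt b : ℝ))⁻¹) :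
    (2 * |zform α₁ α₂ a|)⁻¹ ≤ ((|b.2.1 * c.2.2 - b.2.2 * c.2.1| : ℤ) : ℝ) ∧
    (hgt b : ℝ) ^ 2 / 2 ≤ ((|b.2.1 * c.2.2 - b.2.2 * c.2.1| : ℤ) : ℝ) := by
  have ha0 : 0 < hgt a := hab.1.1
  have hb0 : 0 < hgt b := hbc.1.1
  have hc0 : 0 < hgt c := hbc.2.1.1
  have hA : (0 : ℝ) < hgt a := by exact_mod_cast ha0
  have hB : (0 : ℝ) < hgt b := by exact_mod_cast hb0
  have hC : (0 : ℝ) < hgt c := by exact_mod_cast hc0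
  have hza : 0 < |zform α₁ α₂ a| := by
    rw [abs_pos]
    intro h0
    obtain ⟨-, h4, h5⟩ := h _ _ _ h0
    simp [hgt, h4, h5] at ha0
  have q1 := aux_quarter _ _ _ _ hA hC h1 (aux_minor a c)
  have q2 := aux_quarter _ _ _ _ hA hB h2 (aux_minor a b)
  have hd1 := Int.one_le_abs hdet
  have hd2 : (1 : ℝ) ≤ |((Matrix.det !![a.1, a.2.1, a.2.2; b.1, b.2.1, b.2.2;
      c.1, c.2.1, c.2.2] : ℤ) : ℝ)| := by exact_mod_cast hd1
  have hexp : ((Matrix.det !![a.1, a.2.1, a.2.2; b.1, b.2.1, b.2.2;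
      c.1, c.2.1, c.2.2] : ℤ) : ℝ) =
      zform α₁ α₂ a * ((b.2.1 : ℝ) * c.2.2 - b.2.2 * c.2.1)
      - zform α₁ α₂ b * ((a.2.1 : ℝ) * c.2.2 - a.2.2 * c.2.1)
      + zform α₁ α₂ c * ((a.2.1 : ℝ) * b.2.2 - a.2.2 * b.2.1) := by
    rw [Matrix.det_fin_three]
    simp [zform]
    ring
  rw [hexp] at hd2
  have hD : (((|b.2.1 * c.2.2 - b.2.2 * c.2.1| : ℤ)) : ℝ)
      = |(b.2.1 : ℝ) * c.2.2 - b.2.2 * c.2.1| := by push_cast; rfl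
  rw [hD]
  have hmain : 1 / 2 ≤ |zform α₁ α₂ a| * |(b.2.1 : ℝ) * c.2.2 - b.2.2 * c.2.1| := by
    rw [← abs_mul]
    have t1 := abs_add_le (zform α₁ α₂ a * ((b.2.1 : ℝ) * c.2.2 - b.2.2 * c.2.1)
      - zform α₁ α₂ b * ((a.2.1 : ℝ) * c.2.2 - a.2.2 * c.2.1))
      (zform α₁ α₂ c * ((a.2.1 : ℝ) * b.2.2 - a.2.2 * b.2.1))
    have t2 := abs_sub (zform α₁ α₂ a * ((b.2.1 : ℝ) * c.2.2 - b.2.2 * c.2.1))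
      (zform α₁ α₂ b * ((a.2.1 : ℝ) * c.2.2 - a.2.2 * c.2.1))
    linarith
  have hb2 : 2 ≤ hgt b := by have := hab.2.2.1; omega
  obtain ⟨n, hn0, hn1, hn2⟩ := aux_dirichlet α₁ α₂ (hgt b).toNat (by omega)
  have hcast : (((hgt b).toNat : ℤ)) = hgt b := Int.toNat_of_nonneg hb0.le
  have hcastR : (((hgt b).toNat : ℝ)) = hgt b := by exact_mod_cast congrArg (Int.cast (R := ℝ)) hcast
  rw [hcast] at hn1
  rw [hcastR] at hn2
  have hmin := aux_min α₁ α₂ a b hab n hn0 hn1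
  have hfin : |zform α₁ α₂ a| * (hgt b : ℝ) ^ 2 ≤ 1 :=
    (mul_le_mul_of_nonneg_right hmin (by positivity)).trans hn2
  constructor
  · rw [inv_le_iff_one_le_mul₀ (by positivity)]
    linarith
  · refine le_of_mul_le_mul_left ?_ hza
    linarith
end
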